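/- For all integers d ≥ 2 and n ≥ 1 there exists an ortholattice term t(z̄, x₁,…,x_n) such that for every directly irreducible modular ortholattice M of dimension d: (i) t(b̄, c̄) = 1 for every substitution (b̄, c̄) all of whose entries lie in a subset T of M with |T| < n; and (ii) if M is infinite, then there exists a substitution (b̄, c̄) in M with t(b̄, c̄) ≠ 1. Consequently, no infinite directly irreducible modular ortholattice of finite dimension d ≥ 2 admits a finite universal test set. -/

import Mathlib

universe u

/-- An ortholattice: a bounded lattice with an order-reversing involution `x ↦ x′`
satisfying `x ⊓ x′ = ⊥` and `x ⊔ x′ = ⊤`. -/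
class Ortholattice (α : Type*) extends Lattice α, BoundedOrder α where
  compl : α → α
  compl_antitone : ∀ x y : α, x ≤ y → compl y ≤ compl x
  compl_compl : ∀ x : α, compl (compl x) = x
  inf_compl : ∀ x : α, x ⊓ compl x = ⊥
  sup_compl : ∀ x : α, x ⊔ compl x = ⊤

postfix:max "′" => Ortholattice.compl

/-- The direct product of two ortholattices. -/
instance Ortholattice.prod (α β : Type*) [Ortholattice α] [Ortholattice β] :
    Ortholattice (α × β) where
  compl p := (p.1′, p.2′)
  compl_antitone x y h := ⟨compl_antitone _ _ h.1, compl_antitone _ _ h.2⟩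
  compl_compl x := by cases x; simp [compl_compl]
  inf_compl x := by cases x; rw [Prod.mk_inf_mk]; simp [inf_compl]; rfl
  sup_compl x := by cases x; rw [Prod.mk_sup_mk]; simp [sup_compl]; rfl

/-- An isomorphism of ortholattices: an order isomorphism commuting with
orthocomplementation. -/
structure OLIso (α β : Type*) [Ortholattice α] [Ortholattice β] extends α ≃ β where
  map_rel : ∀ x y : α, x ≤ y ↔ toFun x ≤ toFun y
  map_compl : ∀ x : α, toFun x′ = (toFun x)′

/-- An ortholattice is directly irreducible if it is nontrivial and not isomorphic to a
direct product of two nontrivial ortholattices. -/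
def DirectlyIrreducible (α : Type u) [Ortholattice α] : Prop :=
  Nontrivial α ∧ ∀ (β γ : Type u) [Ortholattice β] [Ortholattice γ],
    Nontrivial β → Nontrivial γ → IsEmpty (OLIso α (β × γ))

/-- A lattice has finite dimension `d` if some maximal chain has exactly `d + 1` elements. -/
def HasDim (α : Type*) [Lattice α] (d : ℕ) : Prop :=
  ∃ s : Set α, IsMaxChain (· ≤ ·) s ∧ s.ncard = d + 1

/-- Ortholattice terms in the operations ∧, ∨, ', 0, 1 with variables indexed by ℕ. -/
inductive OLTerm : Type
  | var : ℕ → OLTerm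
  | zero : OLTerm
  | one : OLTerm
  | inf : OLTerm → OLTerm → OLTerm
  | sup : OLTerm → OLTerm → OLTerm
  | compl : OLTerm → OLTerm

/-- Evaluation of an ortholattice term under a substitution `v`. -/
def OLTerm.eval {α : Type*} [Ortholattice α] (v : ℕ → α) : OLTerm → α
  | var i => v i
  | zero => ⊥
  | one => ⊤
  | inf t s => t.eval v ⊓ s.eval v
  | sup t s => t.eval v ⊔ s.eval v
  | compl t => (t.eval v)′

/-- A term is a tautology of an ortholattice if it evaluates to ⊤ under every substitution. -/
def IsTautology (α : Type*) [Ortholattice α] (t : OLTerm) : Prop :=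
  ∀ v : ℕ → α, t.eval v = ⊤

/-- A universal test set: every term evaluating to ⊤ under all substitutions from `T`
is a tautology. -/
def IsUniversalTestSet (α : Type*) [Ortholattice α] (T : Set α) : Prop :=
  ∀ t : OLTerm, (∀ v : ℕ → α, (∀ i, v i ∈ T) → t.eval v = ⊤) → IsTautology α t

/-! The variables of the term are `x : Fin n → M` together with auxiliary elements `z`. If
`x i ≠ x j`, then `(x i ⊔ x j) ⊓ (x i ⊓ x j)′` is nonzero. In a directly irreducible `M` only `⊥`
and `⊤` are central, so every `c ≠ ⊥, ⊤` is properly enlarged to `c ⊔ (c ⊔ z) ⊓ z′` by a suitable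
`z`. When chains have length at most `d`, a nonzero element has therefore become `⊤` after `d` such
steps, whereas `⊥` stays `⊥` for any choice of `z`. The term is the complement of the meet, over
all `i ≠ j`, of these `d`-fold enlargements. The meet is `⊥` as soon as `x i = x j` for some
`i ≠ j`, which the pigeonhole principle forces on fewer than `n` elements, and it is `⊤` when the
`x i` are distinct and the elements `z` well chosen.

In a modular lattice the height grows by at most one along a cover, so a single maximal chain of
length `d` bounds the length of all chains. -/

section Height

theorem height_le_height_add_one_of_covBy {α : Type*} [Lattice α] [IsLowerModularLattice α]
    {a b : α} (hab : a ⋖ b) : Order.height b ≤ Order.height a + 1 := by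
  obtain htop | hfin := eq_or_ne (Order.height a) ⊤
  · simp only [htop, top_add, le_top]
  lift Order.height a to ℕ using hfin with n hn
  induction n using Nat.strong_induction_on generalizing a b with | _ n ih =>
  refine Order.height_le_coe_iff.mpr fun y hyb => ENat.lt_natCast_add_one_iff.mpr ?_
  by_cases hya : y ≤ a
  · exact hn ▸ Order.height_mono hya
  -- The induction replaces `a ⋖ b` by `a ⊓ y ⋖ y`, whose lower element has smaller height than `a`.
  have hsup : y ⊔ a = b :=
    (hab.eq_or_eq le_sup_right (sup_le hyb.le hab.le)).resolve_left (right_lt_sup.mpr hya).ne'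
  have hcov : a ⊓ y ⋖ y := inf_covBy_of_covBy_sup_left (by rwa [sup_comm, hsup])
  have hlt : Order.height (a ⊓ y) < n := by
    refine Order.height_le_coe_iff.mp hn.ge _ (inf_le_left.lt_of_ne fun h => hyb.ne ?_)
    rw [← hsup, sup_eq_left.mpr (inf_eq_left.mp h)]
  lift Order.height (a ⊓ y) to ℕ using hlt.ne_top with m hm
  calc Order.height y ≤ m + 1 := ih m (by exact_mod_cast hlt) hcov hm
    _ ≤ n := Order.add_one_le_of_lt hlt

theorem covBy_of_flag_covBy {α : Type*} [PartialOrder α] {s : Flag α} {a b : s} (hab : a ⋖ b) :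
    (a : α) ⋖ b := by
  classical
  refine ⟨hab.lt, fun c hac hcb => ?_⟩
  have hc : c ∈ s := Flag.mem_iff_forall_le_or_ge.mpr fun e he => by
    obtain h | h := le_or_gt (⟨e, he⟩ : s) a
    · exact Or.inr (le_trans (Subtype.coe_le_coe.mpr h) hac.le)
    · exact Or.inl (hcb.le.trans (Subtype.coe_le_coe.mpr (hab.ge_of_gt h)))
  exact hab.2 (c := ⟨c, hc⟩) hac hcb

theorem krullDim_le_of_hasDim {α : Type*} [Lattice α] [BoundedOrder α] [IsLowerModularLattice α]
    {d : ℕ} (hd : HasDim α d) : Order.krullDim α ≤ d := by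
  classical
  obtain ⟨s, hs, hcard⟩ := hd
  let S : Flag α := Flag.ofIsMaxChain s hs
  have : Finite S := Set.finite_of_ncard_ne_zero (s := s) (by omega)
  have := Fintype.ofFinite S
  let e : Fin (d + 1) ≃o S := Fintype.orderIsoFinOfCardEq S (by
    rw [← Nat.card_eq_fintype_card]; exact hcard)
  have height_le (i : Fin (d + 1)) : Order.height (e i : α) ≤ (i : ℕ) := by
    induction i using Fin.induction with
    | zero =>
      have hbot : (e 0 : α) = ⊥ := congrArg Subtype.val e.map_bot
      rw [hbot, Order.height_bot]
      exact zero_le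
    | succ i ih =>
      have hcov : e i.castSucc ⋖ e i.succ := (apply_covBy_apply_iff e).mpr (by simp)
      calc Order.height (e i.succ : α) ≤ Order.height (e i.castSucc : α) + 1 :=
            height_le_height_add_one_of_covBy (covBy_of_flag_covBy hcov)
        _ ≤ (i.succ : ℕ) := by simpa using add_le_add_left ih 1
  have htop : e (Fin.last d) = ⊤ := e.map_top
  have h := height_le (Fin.last d)
  rw [htop] at h
  rw [← Order.height_top_eq_krullDim]
  exact_mod_cast h

theorem eq_top_of_forall_lt_succ {α : Type*} [PartialOrder α] [OrderTop α] {d : ℕ}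
    (hd : Order.krullDim α ≤ d) {s : ℕ → α} (hs : Monotone s)
    (hlt : ∀ k, s k ≠ ⊤ → s k < s (k + 1)) : s d = ⊤ := by
  have le_height (k : ℕ) (hk : s k ≠ ⊤) : k ≤ Order.height (s k) := by
    induction k with
    | zero => exact zero_le
    | succ k ih =>
      have hk' : s k ≠ ⊤ := ne_top_of_le_ne_top hk (hs k.le_succ)
      calc ((k + 1 : ℕ) : ℕ∞) ≤ Order.height (s k) + 1 := by
            exact_mod_cast add_le_add_left (ih hk') 1
        _ ≤ Order.height (s (k + 1)) := Order.height_add_one_le (hlt k hk')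
  by_contra htop
  have h : (d + 1 : ℕ∞) ≤ d :=
    calc (d + 1 : ℕ∞) ≤ Order.height (s d) + 1 := add_le_add_left (le_height d htop) 1
      _ ≤ Order.height (⊤ : α) := Order.height_add_one_le (lt_top_iff_ne_top.mpr htop)
      _ ≤ d := by
        rw [← Order.height_top_eq_krullDim] at hd
        exact_mod_cast hd
  exact absurd h (by exact_mod_cast Nat.not_succ_le_self d)

end Height

theorem nontrivial_Iic_of_ne_bot {α : Type*} [PartialOrder α] [OrderBot α] {c : α} (hc : c ≠ ⊥) :
    Nontrivial (Set.Iic c) :=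
  ⟨⊥, ⊤, fun h => hc (congrArg Subtype.val h).symm⟩

namespace Ortholattice

section Compl

variable {M : Type*} [Ortholattice M]

theorem compl_sup (x y : M) : (x ⊔ y)′ = x′ ⊓ y′ := by
  refine le_antisymm
    (le_inf (compl_antitone _ _ le_sup_left) (compl_antitone _ _ le_sup_right)) ?_
  have hx : x ≤ (x′ ⊓ y′)′ := by
    simpa only [compl_compl] using compl_antitone (x′ ⊓ y′) x′ inf_le_left
  have hy : y ≤ (x′ ⊓ y′)′ := by
    simpa only [compl_compl] using compl_antitone (x′ ⊓ y′) y′ inf_le_right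
  simpa only [compl_compl] using compl_antitone _ _ (sup_le hx hy)

theorem compl_inf (x y : M) : (x ⊓ y)′ = x′ ⊔ y′ := by
  rw [← compl_compl (x′ ⊔ y′), compl_sup, compl_compl, compl_compl]

theorem compl_bot : (⊥ : M)′ = ⊤ := by
  rw [← sup_compl (⊥ : M), bot_sup_eq]

theorem compl_top : (⊤ : M)′ = ⊥ := by
  rw [← inf_compl (⊤ : M), top_inf_eq]

end Compl

/-- An ortholattice is orthomodular if `x ⊔ (x′ ⊓ y) = y` whenever `x ≤ y`, which is the modular law
for `x`, `x′` and `y`. -/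
class IsOrthomodular (M : Type*) [Ortholattice M] : Prop where
  sup_compl_inf_of_le : ∀ {x y : M}, x ≤ y → x ⊔ x′ ⊓ y = y

instance (M : Type*) [Ortholattice M] [IsModularLattice M] : IsOrthomodular M where
  sup_compl_inf_of_le {x y} hxy := by
    rw [← sup_inf_assoc_of_le _ hxy, sup_compl, top_inf_eq]

open IsOrthomodular (sup_compl_inf_of_le)

section Orthomodular

variable {M : Type*} [Ortholattice M] [IsOrthomodular M] {a b c x y : M}

theorem sup_compl_inf_self_of_le (hxy : x ≤ y) : (x ⊔ y′) ⊓ y = x := by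
  have h := congrArg compl (sup_compl_inf_of_le (compl_antitone x y hxy))
  rwa [compl_sup, compl_inf, compl_compl, compl_compl, sup_comm, inf_comm] at h

theorem sup_inf_eq_left_of_le_of_le_compl (hac : a ≤ c) (hbc : b ≤ c′) : (a ⊔ b) ⊓ c = a := by
  refine le_antisymm ?_ (le_inf le_sup_left hac)
  calc (a ⊔ b) ⊓ c ≤ (a ⊔ c′) ⊓ c := inf_le_inf_right c (sup_le_sup_left hbc a)
    _ = a := sup_compl_inf_self_of_le hac

/-- The interval below `c` as an ortholattice, with the relative orthocomplement `y′ ⊓ c`. -/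
instance iic (c : M) : Ortholattice (Set.Iic c) where
  compl y := ⟨(y : M)′ ⊓ c, inf_le_right⟩
  compl_antitone _ _ hxy := Subtype.mk_le_mk.mpr (inf_le_inf_right c (compl_antitone _ _ hxy))
  compl_compl y := Subtype.ext <| by
    rw [compl_inf, compl_compl]
    exact sup_compl_inf_self_of_le y.2
  inf_compl y := Subtype.ext <| by
    change (y : M) ⊓ (y′ ⊓ c) = ⊥
    rw [← inf_assoc, inf_compl, bot_inf_eq]
  sup_compl y := Subtype.ext (sup_compl_inf_of_le y.2)

/-- An element is central if it commutes with every element of the ortholattice, that is, if it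
splits every element into a part below it and a part below its complement. -/
def IsCentral (c : M) : Prop :=
  ∀ y, y ≤ y ⊓ c ⊔ y ⊓ c′

omit [IsOrthomodular M] in
theorem IsCentral.compl (hc : IsCentral c) : IsCentral c′ := fun y => by
  rw [compl_compl, sup_comm]
  exact hc y

theorem IsCentral.compl_inf_inf (hc : IsCentral c) (x : M) : (x ⊓ c)′ ⊓ c = x′ ⊓ c := by
  refine le_antisymm ?_ (inf_le_inf_right c (compl_antitone _ _ inf_le_left))
  have hle : (x ⊓ c)′ ≤ x′ ⊓ c ⊔ c′ := by
    rw [compl_inf]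
    exact sup_le ((hc x′).trans (sup_le_sup_left inf_le_right _)) le_sup_right
  calc (x ⊓ c)′ ⊓ c ≤ (x′ ⊓ c ⊔ c′) ⊓ c := inf_le_inf_right c hle
    _ = x′ ⊓ c := sup_compl_inf_self_of_le inf_le_right

/-- The decomposition of an ortholattice as a product of intervals at a central element. -/
def IsCentral.prodIso (hc : IsCentral c) : OLIso M (Set.Iic c × Set.Iic c′) where
  toFun x := (⟨x ⊓ c, inf_le_right⟩, ⟨x ⊓ c′, inf_le_right⟩)
  invFun p := p.1 ⊔ p.2
  left_inv x := le_antisymm (sup_le inf_le_left inf_le_left) (hc x)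
  right_inv := fun ⟨⟨a, ha⟩, ⟨b, hb⟩⟩ => by
    refine Prod.ext (Subtype.ext (sup_inf_eq_left_of_le_of_le_compl ha hb)) (Subtype.ext ?_)
    change (a ⊔ b) ⊓ c′ = b
    rw [sup_comm]
    exact sup_inf_eq_left_of_le_of_le_compl hb (by rwa [compl_compl])
  map_rel x y := ⟨fun h => ⟨inf_le_inf_right c h, inf_le_inf_right c′ h⟩, fun h =>
    (hc x).trans (sup_le (le_trans h.1 inf_le_left) (le_trans h.2 inf_le_left))⟩
  map_compl x := Prod.ext (Subtype.ext (hc.compl_inf_inf x).symm)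
    (Subtype.ext (hc.compl.compl_inf_inf x).symm)

theorem IsCentral.eq_bot_or_eq_top (hc : IsCentral c) (hM : DirectlyIrreducible M) :
    c = ⊥ ∨ c = ⊤ := by
  by_contra! h
  have hc' : c′ ≠ ⊥ := fun h' => h.2 (by rw [← compl_compl c, h', compl_bot])
  exact (hM.2 _ _ (nontrivial_Iic_of_ne_bot h.1) (nontrivial_Iic_of_ne_bot hc')).false hc.prodIso

end Orthomodular

section Enlarge

variable {M : Type*} [Ortholattice M]

/-- The join of `a` with its Sasaki projection to `z′`. -/
def enlarge (a z : M) : M :=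
  a ⊔ (a ⊔ z) ⊓ z′

/-- The result of enlarging `a` successively by `z 0, …, z (k - 1)`. -/
def enlargeIter (a : M) (z : ℕ → M) : ℕ → M
  | 0 => a
  | k + 1 => enlarge (enlargeIter a z k) (z k)

theorem enlargeIter_bot (z : ℕ → M) (k : ℕ) : enlargeIter ⊥ z k = ⊥ := by
  induction k with
  | zero => rfl
  | succ k ih => rw [enlargeIter, ih, enlarge, bot_sup_eq, bot_sup_eq, inf_compl]

theorem enlargeIter_mono (a : M) (z : ℕ → M) : Monotone (enlargeIter a z) :=
  monotone_nat_of_le_succ fun _ => le_sup_left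

theorem isCentral_of_forall_enlarge_eq [IsOrthomodular M] {c : M} (h : ∀ z, enlarge c z = c) :
    IsCentral c := fun y => by
  have hinf : (c ⊔ y′) ⊓ y ≤ y ⊓ c :=
    le_inf inf_le_right (by simpa only [compl_compl] using sup_eq_left.mp (h y′))
  have hcompl : (y ⊓ c)′ ≤ y ⊓ c′ ⊔ y′ := by
    have h' := compl_antitone _ _ hinf
    rwa [compl_inf (c ⊔ y′), compl_sup, compl_compl, inf_comm c′] at h'
  calc y = y ⊓ c ⊔ (y ⊓ c)′ ⊓ y := (sup_compl_inf_of_le inf_le_left).symm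
    _ ≤ y ⊓ c ⊔ (y ⊓ c′ ⊔ y′) ⊓ y := sup_le_sup_left (inf_le_inf_right y hcompl) _
    _ = y ⊓ c ⊔ y ⊓ c′ := by rw [sup_compl_inf_self_of_le inf_le_left]

theorem exists_lt_enlarge [IsOrthomodular M] (hM : DirectlyIrreducible M) {c : M} (hbot : c ≠ ⊥)
    (htop : c ≠ ⊤) : ∃ z, c < enlarge c z := by
  by_contra! h
  have hc : IsCentral c := isCentral_of_forall_enlarge_eq fun z =>
    (le_sup_left.eq_of_not_lt (h z)).symm
  exact (hc.eq_bot_or_eq_top hM).elim hbot htop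

theorem exists_enlargeIter_eq_top [IsOrthomodular M] (hM : DirectlyIrreducible M) {d : ℕ}
    (hd : Order.krullDim M ≤ d) {a : M} (ha : a ≠ ⊥) : ∃ z, enlargeIter a z d = ⊤ := by
  have := hM.1
  choose! w hw using fun c : M => exists_lt_enlarge (c := c) hM
  let z (k : ℕ) : M := w ((fun c => enlarge c (w c))^[k] a)
  have hz (k : ℕ) : z k = w (enlargeIter a z k) := by
    suffices enlargeIter a z k = (fun c => enlarge c (w c))^[k] a by rw [this]
    induction k with
    | zero => rfl
    | succ k ih => rw [enlargeIter, ih, Function.iterate_succ_apply']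
  refine ⟨z, eq_top_of_forall_lt_succ hd (enlargeIter_mono a z) fun k hk => ?_⟩
  have hbot : enlargeIter a z k ≠ ⊥ :=
    ne_bot_of_le_ne_bot ha (enlargeIter_mono a z (Nat.zero_le k))
  rw [enlargeIter, hz]
  exact hw _ hbot hk

end Enlarge

section Discrepancy

variable {M : Type*} [Ortholattice M]

/-- The relative complement of `x ⊓ y` in `x ⊔ y`, which vanishes only if `x = y`. -/
def discrepancy (x y : M) : M :=
  (x ⊔ y) ⊓ (x ⊓ y)′

theorem discrepancy_self (x : M) : discrepancy x x = ⊥ := by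
  rw [discrepancy, sup_idem, inf_idem, inf_compl]

theorem discrepancy_ne_bot [IsOrthomodular M] {x y : M} (hxy : x ≠ y) : discrepancy x y ≠ ⊥ := by
  intro h
  have hsup : x ⊔ y = x ⊓ y := by
    rw [← sup_compl_inf_of_le (inf_le_sup : x ⊓ y ≤ x ⊔ y), inf_comm _ (x ⊔ y)]
    rw [discrepancy] at h
    rw [h, sup_bot_eq]
  exact hxy (sup_eq_inf.mp hsup)

end Discrepancy

end Ortholattice

namespace OLTerm

/-- The term whose value is the `enlargeIter` of the values. -/
def enlargeIter (a : OLTerm) (z : ℕ → OLTerm) : ℕ → OLTerm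
  | 0 => a
  | k + 1 =>
    let b := enlargeIter a z k
    sup b (inf (sup b (z k)) (compl (z k)))

/-- The term whose value is the `discrepancy` of the values. -/
def discrepancy (s t : OLTerm) : OLTerm :=
  inf (sup s t) (compl (inf s t))

/-- The meet of a finite family of terms. -/
noncomputable def finsetInf {ι : Type*} (s : Finset ι) (f : ι → OLTerm) : OLTerm :=
  s.toList.foldr (fun i t => inf (f i) t) one

variable {M : Type*} [Ortholattice M] (v : ℕ → M)

theorem eval_discrepancy (s t : OLTerm) :
    (discrepancy s t).eval v = Ortholattice.discrepancy (s.eval v) (t.eval v) :=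
  rfl

theorem eval_enlargeIter (a : OLTerm) (z : ℕ → OLTerm) (k : ℕ) :
    (enlargeIter a z k).eval v = Ortholattice.enlargeIter (a.eval v) (fun i => (z i).eval v) k := by
  induction k with
  | zero => rfl
  | succ k ih =>
    simp only [enlargeIter, Ortholattice.enlargeIter, Ortholattice.enlarge, eval, ih]

theorem le_eval_finsetInf_iff {ι : Type*} {s : Finset ι} {f : ι → OLTerm} {a : M} :
    a ≤ (finsetInf s f).eval v ↔ ∀ i ∈ s, a ≤ (f i).eval v := by
  simp only [← Finset.mem_toList, finsetInf]
  induction s.toList with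
  | nil => simp only [List.foldr_nil, eval, le_top, List.not_mem_nil, false_imp_iff, implies_true]
  | cons i l ih => simp only [List.foldr_cons, eval, le_inf_iff, ih, List.forall_mem_cons]

end OLTerm

/-- The variables of `distinctnessTerm d n`: the elements to be compared, and for each pair of them
a sequence of elements by which their discrepancy is enlarged. -/
abbrev DistinctnessVar (n : ℕ) : Type :=
  Fin n ⊕ (Fin n × Fin n) × ℕ

/-- A variable of `distinctnessTerm d n` as a term, numbered by the encoding of its index. -/
def DistinctnessVar.term {n : ℕ} (i : DistinctnessVar n) : OLTerm :=
  .var (Encodable.encode i)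

/-- The term comparing two elements, with the discrepancy enlarged `d` times. -/
def comparisonTerm (d : ℕ) {n : ℕ} (i j : Fin n) : OLTerm :=
  .enlargeIter (.discrepancy (DistinctnessVar.term (.inl i)) (DistinctnessVar.term (.inl j)))
    (fun k => DistinctnessVar.term (.inr ((i, j), k))) d

/-- The meet of all comparisons among `n` elements. It is `⊥` whenever two of them agree, and can be
made `⊤` on distinct elements if chains have length at most `d`. -/
noncomputable def distinctnessTerm (d n : ℕ) : OLTerm :=
  .finsetInf (Finset.univ : Finset (Fin n)).offDiag fun p => comparisonTerm d p.1 p.2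

section DistinctnessTerm

open Encodable Ortholattice

variable {M : Type*} [Ortholattice M] {d n : ℕ}

theorem eval_comparisonTerm (v : ℕ → M) (i j : Fin n) :
    (comparisonTerm d i j).eval v =
      enlargeIter (discrepancy (v (encode (.inl i : DistinctnessVar n)))
        (v (encode (.inl j : DistinctnessVar n))))
        (fun k => v (encode (.inr ((i, j), k) : DistinctnessVar n))) d := by
  rw [comparisonTerm, OLTerm.eval_enlargeIter, OLTerm.eval_discrepancy]
  rfl

theorem le_eval_distinctnessTerm_iff {v : ℕ → M} {a : M} :
    a ≤ (distinctnessTerm d n).eval v ↔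
      ∀ i j : Fin n, i ≠ j → a ≤ (comparisonTerm d i j).eval v := by
  simp only [distinctnessTerm, OLTerm.le_eval_finsetInf_iff, Finset.mem_offDiag, Finset.mem_univ,
    true_and, Prod.forall]

theorem eval_distinctnessTerm_eq_bot {T : Set M} (hT : T.Finite) (hn : T.ncard < n) {v : ℕ → M}
    (hv : ∀ i, v i ∈ T) : (distinctnessTerm d n).eval v = ⊥ := by
  obtain ⟨i, -, j, -, hij, heq⟩ := Set.exists_ne_map_eq_of_ncard_lt_of_maps_to
    (s := (Set.univ : Set (Fin n))) (f := fun i => v (encode (.inl i : DistinctnessVar n)))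
    (by simpa using hn) (fun i _ => hv _) hT
  refine le_bot_iff.mp ((le_eval_distinctnessTerm_iff.mp le_rfl i j hij).trans_eq ?_)
  rw [eval_comparisonTerm, heq, discrepancy_self, enlargeIter_bot]

theorem exists_eval_distinctnessTerm_eq_top [IsOrthomodular M] (hM : DirectlyIrreducible M)
    (hd : Order.krullDim M ≤ d) (hn : n ≤ ENat.card M) :
    ∃ v : ℕ → M, (distinctnessTerm d n).eval v = ⊤ := by
  have := hM.1
  obtain ⟨x, -⟩ := Fin.Embedding.exists_embedding_disjoint_range_of_add_le_ENat_card
    (s := (∅ : Set M)) (n := n) (by simpa using hn)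
  have hz (p : Fin n × Fin n) (hp : p.1 ≠ p.2) :
      ∃ z : ℕ → M, enlargeIter (discrepancy (x p.1) (x p.2)) z d = ⊤ :=
    exists_enlargeIter_eq_top hM hd (discrepancy_ne_bot (x.injective.ne hp))
  choose! z hz using hz
  let f : DistinctnessVar n → M := Sum.elim x fun q => z q.1 q.2
  let v : ℕ → M := Function.extend encode f fun _ => ⊥
  have hv (i : DistinctnessVar n) : v (encode i) = f i := encode_injective.extend_apply f _ i
  refine ⟨v, top_le_iff.mp (le_eval_distinctnessTerm_iff.mpr fun i j hij => ?_)⟩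
  rw [eval_comparisonTerm]
  simp only [hv]
  exact (hz (i, j) hij).ge

theorem eval_compl_distinctnessTerm_eq_top {T : Set M} (hT : T.Finite) (hn : T.ncard < n)
    {v : ℕ → M} (hv : ∀ i, v i ∈ T) : (distinctnessTerm d n).compl.eval v = ⊤ := by
  rw [OLTerm.eval, eval_distinctnessTerm_eq_bot hT hn hv, Ortholattice.compl_bot]

theorem exists_eval_compl_distinctnessTerm_ne_top [IsOrthomodular M] (hM : DirectlyIrreducible M)
    (hd : Order.krullDim M ≤ d) (hn : n ≤ ENat.card M) :
    ∃ v : ℕ → M, (distinctnessTerm d n).compl.eval v ≠ ⊤ := by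
  obtain ⟨v, hv⟩ := exists_eval_distinctnessTerm_eq_top hM hd hn
  have := hM.1
  exact ⟨v, by rw [OLTerm.eval, hv, Ortholattice.compl_top]; exact bot_ne_top⟩

end DistinctnessTerm

theorem stmt11_general (d n : ℕ) :
    (∃ t : OLTerm,
      (∀ (M : Type u) [Ortholattice M] (T : Set M), T.Finite → T.ncard < n →
        ∀ v : ℕ → M, (∀ i, v i ∈ T) → t.eval v = ⊤) ∧
      ∀ (M : Type u) [Ortholattice M] [Ortholattice.IsOrthomodular M],
        DirectlyIrreducible M → Order.krullDim M ≤ d → n ≤ ENat.card M →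
          ∃ v : ℕ → M, t.eval v ≠ ⊤) ∧
    ∀ (M : Type u) [Ortholattice M] [Ortholattice.IsOrthomodular M],
      DirectlyIrreducible M → Order.krullDim M ≤ d →
        ∀ T : Set M, T.Finite → IsUniversalTestSet M T → T = Set.univ := by
  refine ⟨⟨(distinctnessTerm d n).compl,
    fun _ _ _ hT hn _ => eval_compl_distinctnessTerm_eq_top hT hn,
    fun _ _ _ => exists_eval_compl_distinctnessTerm_ne_top⟩, fun M _ _ hM hd T hT hU => ?_⟩
  by_contra hne
  have hcard : (T.ncard + 1 : ℕ) ≤ ENat.card M := by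
    rw [Nat.cast_add_one, hT.cast_ncard_eq, ← Set.encard_univ]
    exact Order.add_one_le_of_lt (hT.encard_lt_encard (Set.ssubset_univ_iff.mpr hne))
  obtain ⟨v, hv⟩ := exists_eval_compl_distinctnessTerm_ne_top hM hd hcard
  exact hv (hU _ (fun _ => eval_compl_distinctnessTerm_eq_top hT (Nat.lt_succ_self _)) v)

/-- For all `d ≥ 2` and `n ≥ 1` there is an ortholattice term `t` such that for every
directly irreducible modular ortholattice `M` of dimension `d`: (i) `t` evaluates to `⊤`
under every substitution whose entries lie in a subset `T` of `M` with `|T| < n`; and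
(ii) if `M` is infinite there is a substitution under which `t` does not evaluate to `⊤`.
Consequently, no infinite directly irreducible modular ortholattice of finite dimension
`d ≥ 2` admits a finite universal test set. -/
theorem stmt11 (d n : ℕ) (hd : 2 ≤ d) (hn : 1 ≤ n) :
    (∃ t : OLTerm, ∀ (M : Type u) [Ortholattice M] [IsModularLattice M],
      DirectlyIrreducible M → HasDim M d →
        ((∀ T : Set M, T.Finite → T.ncard < n →
            ∀ v : ℕ → M, (∀ i, v i ∈ T) → t.eval v = ⊤) ∧
          (Infinite M → ∃ v : ℕ → M, t.eval v ≠ ⊤))) ∧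
    (∀ (M : Type u) [Ortholattice M] [IsModularLattice M],
      DirectlyIrreducible M → HasDim M d → Infinite M →
        ¬ ∃ T : Set M, T.Finite ∧ IsUniversalTestSet M T) := by
  obtain ⟨⟨t, htop, hne_top⟩, huniv⟩ := stmt11_general.{u} d n
  exact ⟨⟨t, fun M _ _ hM hdim => ⟨htop M, fun _ =>
    hne_top M hM (krullDim_le_of_hasDim hdim) (by simp)⟩⟩, fun M _ _ hM hdim _ ⟨T, hT, hU⟩ =>
    Set.infinite_univ (huniv M hM (krullDim_le_of_hasDim hdim) T hT hU ▸ hT)⟩
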